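/- arXiv:1909.06648 — 3 statements merged into one kernel-verified Lean document; each statement's English description precedes it below -/
import Mathlib

section
/- Let (a,b) ∈ [0,1]² and let c satisfy 0 ≤ c ≤ min{a,b,1−a,1−b,|b−a|}. Then: (i) C̲^{(a,b)}_c(a,b) − C̲^{(a,b)}_c(b,a) = c and C̄^{(a,b)}_c(a,b) − C̄^{(a,b)}_c(b,a) = c; (ii) for every copula C with C(a,b) − C(b,a) = c, one has C̲^{(a,b)}_c(u,v) ≤ C(u,v) ≤ C̄^{(a,b)}_c(u,v) for all (u,v) ∈ [0,1]². -/
open Set MeasureTheory intervalIntegral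

/-- A bivariate copula: boundary conditions plus the 2-increasing property. -/
def IsCopula (C : ℝ → ℝ → ℝ) : Prop :=
  (∀ u ∈ Set.Icc (0:ℝ) 1, C u 0 = 0 ∧ C 0 u = 0 ∧ C u 1 = u ∧ C 1 u = u) ∧
  ∀ u₁ u₂ v₁ v₂ : ℝ, 0 ≤ u₁ → u₁ ≤ u₂ → u₂ ≤ 1 → 0 ≤ v₁ → v₁ ≤ v₂ → v₂ ≤ 1 →
    0 ≤ C u₂ v₂ - C u₂ v₁ - C u₁ v₂ + C u₁ v₁

/-- The lower bound function C̲^{(a,b)}_c. -/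
noncomputable def lowerC (a b c : ℝ) : ℝ → ℝ → ℝ := fun u v =>
  max (max (u + v - 1) 0)
    (min (min (max (a + b - 1) 0 + c) (u - a + (max (a + b - 1) 0 + c)))
      (min (v - b + (max (a + b - 1) 0 + c)) (u + v - a - b + (max (a + b - 1) 0 + c))))

/-- The upper bound function C̄^{(a,b)}_c. -/
noncomputable def upperC (a b c : ℝ) : ℝ → ℝ → ℝ := fun u v =>
  min (min u v)
    (max (max (min a b - c) (u - b + (min a b - c)))
      (max (v - a + (min a b - c)) (u + v - a - b + (min a b - c))))

/-- Spearman's rho of a copula. -/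
noncomputable def spearmanRho (C : ℝ → ℝ → ℝ) : ℝ :=
  12 * (∫ u in (0:ℝ)..1, ∫ v in (0:ℝ)..1, C u v) - 3

/-- Spearman's footrule of a copula. -/
noncomputable def spearmanFootrule (C : ℝ → ℝ → ℝ) : ℝ :=
  6 * (∫ u in (0:ℝ)..1, C u u) - 2

/-- Gini's gamma of a copula. -/
noncomputable def giniGamma (C : ℝ → ℝ → ℝ) : ℝ :=
  4 * (∫ u in (0:ℝ)..1, (C u u + C u (1 - u))) - 2

/-- Blomqvist's beta of a copula. -/
noncomputable def blomqvistBeta (C : ℝ → ℝ → ℝ) : ℝ :=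
  4 * C (1/2) (1/2) - 1

namespace IsCopula

variable {C : ℝ → ℝ → ℝ}

theorem monotone_left (hC : IsCopula C) {u u' v : ℝ} (hu : 0 ≤ u) (huu' : u ≤ u') (hu' : u' ≤ 1)
    (hv : v ∈ Set.Icc (0 : ℝ) 1) : C u v ≤ C u' v := by
  have h := hC.2 u u' 0 v hu huu' hu' le_rfl hv.1 hv.2
  rw [(hC.1 u ⟨hu, huu'.trans hu'⟩).1, (hC.1 u' ⟨hu.trans huu', hu'⟩).1] at h
  linarith

theorem monotone_right (hC : IsCopula C) {u v v' : ℝ} (hu : u ∈ Set.Icc (0 : ℝ) 1) (hv : 0 ≤ v)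
    (hvv' : v ≤ v') (hv' : v' ≤ 1) : C u v ≤ C u v' := by
  have h := hC.2 0 u v v' le_rfl hu.1 hu.2 hv hvv' hv'
  rw [(hC.1 v ⟨hv, hvv'.trans hv'⟩).2.1, (hC.1 v' ⟨hv.trans hvv', hv'⟩).2.1] at h
  linarith

theorem sub_le_left (hC : IsCopula C) {u u' v : ℝ} (hu : u ∈ Set.Icc (0 : ℝ) 1)
    (hu' : u' ∈ Set.Icc (0 : ℝ) 1) (hv : v ∈ Set.Icc (0 : ℝ) 1) :
    C u' v - C u v ≤ max (u' - u) 0 := by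
  rcases le_total u u' with huu' | huu'
  · have h := hC.2 u u' v 1 hu.1 huu' hu'.2 hv.1 hv.2 le_rfl
    rw [(hC.1 u hu).2.2.1, (hC.1 u' hu').2.2.1] at h
    exact le_max_of_le_left (by linarith)
  · exact le_max_of_le_right (sub_nonpos.2 (hC.monotone_left hu'.1 huu' hu.2 hv))

theorem sub_le_right (hC : IsCopula C) {u v v' : ℝ} (hu : u ∈ Set.Icc (0 : ℝ) 1)
    (hv : v ∈ Set.Icc (0 : ℝ) 1) (hv' : v' ∈ Set.Icc (0 : ℝ) 1) :
    C u v' - C u v ≤ max (v' - v) 0 := by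
  rcases le_total v v' with hvv' | hvv'
  · have h := hC.2 u 1 v v' hu.1 hu.2 le_rfl hv.1 hvv' hv'.2
    rw [(hC.1 v hv).2.2.2, (hC.1 v' hv').2.2.2] at h
    exact le_max_of_le_left (by linarith)
  · exact le_max_of_le_right (sub_nonpos.2 (hC.monotone_right hu hv'.1 hvv' hv.2))

/-- Copulas are 1-Lipschitz for the `ℓ¹` metric, in one-sided form. -/
theorem sub_le (hC : IsCopula C) {u v u' v' : ℝ} (hu : u ∈ Set.Icc (0 : ℝ) 1)
    (hv : v ∈ Set.Icc (0 : ℝ) 1) (hu' : u' ∈ Set.Icc (0 : ℝ) 1) (hv' : v' ∈ Set.Icc (0 : ℝ) 1) :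
    C u' v' - C u v ≤ max (u' - u) 0 + max (v' - v) 0 := by
  linarith [hC.sub_le_left hu hu' hv', hC.sub_le_right hu hv hv']

/-- The lower Fréchet–Hoeffding bound. -/
theorem max_le (hC : IsCopula C) {u v : ℝ} (hu : u ∈ Set.Icc (0 : ℝ) 1)
    (hv : v ∈ Set.Icc (0 : ℝ) 1) : max (u + v - 1) 0 ≤ C u v := by
  have h1 := hC.2 u 1 v 1 hu.1 hu.2 le_rfl hv.1 hv.2 le_rfl
  have h0 := hC.monotone_left le_rfl hu.1 hu.2 hv
  rw [(hC.1 u hu).2.2.1, (hC.1 v hv).2.2.2, (hC.1 1 (by simp)).2.2.1] at h1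
  rw [(hC.1 v hv).2.1] at h0
  exact _root_.max_le (by linarith) h0

/-- The upper Fréchet–Hoeffding bound. -/
theorem le_min (hC : IsCopula C) {u v : ℝ} (hu : u ∈ Set.Icc (0 : ℝ) 1)
    (hv : v ∈ Set.Icc (0 : ℝ) 1) : C u v ≤ min u v := by
  have h1 := hC.monotone_right hu hv.1 hv.2 le_rfl
  have h2 := hC.monotone_left hu.1 hu.2 le_rfl hv
  rw [(hC.1 u hu).2.2.1] at h1
  rw [(hC.1 v hv).2.2.2] at h2
  exact _root_.le_min h1 h2

end IsCopula

theorem lowerC_eq (a b c u v : ℝ) : lowerC a b c u v =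
    max (max (u + v - 1) 0)
      (max (a + b - 1) 0 + c - max (a - u) 0 - max (b - v) 0) := by
  unfold lowerC
  generalize max (a + b - 1) 0 + c = d
  congr 1
  grind

theorem upperC_eq (a b c u v : ℝ) : upperC a b c u v =
    min (min u v) (min a b - c + max (u - b) 0 + max (v - a) 0) := by
  unfold upperC
  generalize min a b - c = d
  congr 1
  grind

theorem local_frechet_hoeffding_bounds (a b c : ℝ) (ha : a ∈ Set.Icc (0:ℝ) 1)
    (hb : b ∈ Set.Icc (0:ℝ) 1) (hc0 : 0 ≤ c)
    (hc : c ≤ min (min (min a b) (min (1 - a) (1 - b))) |b - a|) :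
    (lowerC a b c a b - lowerC a b c b a = c ∧
     upperC a b c a b - upperC a b c b a = c) ∧
    ∀ C : ℝ → ℝ → ℝ, IsCopula C → C a b - C b a = c →
      ∀ u ∈ Set.Icc (0:ℝ) 1, ∀ v ∈ Set.Icc (0:ℝ) 1,
        lowerC a b c u v ≤ C u v ∧ C u v ≤ upperC a b c u v := by
  have hcd := hc.trans (min_le_right _ _)
  have habs : |b - a| = max (a - b) 0 + max (b - a) 0 := by grind
  refine ⟨⟨?_, ?_⟩, fun C hC hCab u hu v hv => ?_⟩
  · have hba : max (a + b - 1) 0 + c - max (a - b) 0 - max (b - a) 0 ≤ max (b + a - 1) 0 := by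
      rw [add_comm b a]; linarith
    rw [lowerC_eq, lowerC_eq, max_eq_left hba, add_comm b a, sub_self, sub_self, max_self,
      sub_zero, sub_zero, max_eq_right (by linarith)]
    ring
  · have hab : min a b ≤ min a b - c + max (a - b) 0 + max (b - a) 0 := by linarith
    rw [upperC_eq, upperC_eq, min_eq_left hab, min_comm b a, sub_self, sub_self, max_self,
      add_zero, add_zero, min_eq_right (sub_le_self (min a b) hc0)]
    ring
  · rw [lowerC_eq, upperC_eq]
    constructor
    · refine max_le (hC.max_le hu hv) ?_
      linarith [hC.sub_le hu hv ha hb, add_comm a b ▸ hC.max_le hb ha]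
    · refine le_min (hC.le_min hu hv) ?_
      linarith [hC.le_min ha hb, hC.sub_le hb ha hu hv]
end

section
/- Let (a,b) ∈ [0,1]² and let c satisfy 0 ≤ c ≤ min{a,b,1−a,1−b}, and set d₁ = max{a+b−1,0} + c. Then 12∫₀¹∫₀¹ C̲^{(a,b)}_c(u,v) du dv − 3 = 6d₁(1−a−b+d₁)(1−a−b+2d₁) − 1; equivalently, Spearman's rho of C̲^{(a,b)}_c equals 6d₁(1−a−b+d₁)(1−a−b+2d₁) − 1. -/
open Set MeasureTheory intervalIntegral

lemma integral_max_sub_zero {t : ℝ} (h0 : 0 ≤ t) (h1 : t ≤ 1) :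
    ∫ v in (0:ℝ)..1, max (v - t) 0 = (1 - t) ^ 2 / 2 := by
  have hcont : Continuous fun v : ℝ => max (v - t) 0 := by fun_prop
  rw [← integral_add_adjacent_intervals (hcont.intervalIntegrable 0 t)
    (hcont.intervalIntegrable t 1)]
  have hleft : ∫ v in (0:ℝ)..t, max (v - t) 0 = ∫ _ in (0:ℝ)..t, (0:ℝ) := by
    refine integral_congr fun v hv => ?_
    rw [uIcc_of_le h0] at hv
    exact max_eq_right (by linarith [hv.2])
  have hright : ∫ v in t..1, max (v - t) 0 = ∫ v in t..1, (v - t) := by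
    refine integral_congr fun v hv => ?_
    rw [uIcc_of_le h1] at hv
    exact max_eq_left (by linarith [hv.1])
  rw [hleft, hright]
  simp
  ring

lemma integral_sq_add_const (m n p q : ℝ) :
    ∫ u in p..q, ((u + m) ^ 2 + n) / 2
      = ((q + m) ^ 3 - (p + m) ^ 3) / 6 + n * (q - p) / 2 := by
  rw [integral_eq_sub_of_hasDerivAt (f := fun u => (u + m) ^ 3 / 6 + n * u / 2)]
  · ring
  · intro u _
    have h := ((((hasDerivAt_id u).add_const m).pow 3).div_const 6).add
      (((hasDerivAt_id u).const_mul n).div_const 2)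
    refine h.congr_deriv ?_
    simp
    ring
  · exact Continuous.intervalIntegrable (by fun_prop) _ _

/-- The `v`-section of `lowerC`, with `k = d - (a - u)⁺`, below or beyond the rectangle on which
`lowerC` differs from the lower Fréchet–Hoeffding bound. -/
lemma integral_section_of_outside {b k u : ℝ} (h0 : 0 ≤ u) (h1 : u ≤ 1)
    (h : k ≤ 0 ∨ k ≤ u + b - 1) :
    ∫ v in (0:ℝ)..1, max (max (u + v - 1) 0) (min (v - b) 0 + k) = u ^ 2 / 2 := by
  have heq : ∀ v : ℝ, max (max (u + v - 1) 0) (min (v - b) 0 + k) = max (v - (1 - u)) 0 := by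
    intro v
    grind
  simp_rw [heq]
  rw [integral_max_sub_zero (by linarith) (by linarith)]
  ring

/-- The `v`-section of `lowerC`, with `k = d - (a - u)⁺`, across the rectangle on which
`lowerC` differs from the lower Fréchet–Hoeffding bound. -/
lemma integral_section_of_inside {b k u : ℝ} (hb : b ≤ 1) (hu : u ≤ 1)
    (hk : 0 ≤ k) (hkb : k ≤ b) (hku : k ≤ u) (h : u + b - 1 ≤ k) :
    ∫ v in (0:ℝ)..1, max (max (u + v - 1) 0) (min (v - b) 0 + k)
      = ((1 - b + k) ^ 2 - (1 - b) ^ 2 + (u - k) ^ 2) / 2 := by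
  have heq : ∀ v : ℝ, max (max (u + v - 1) 0) (min (v - b) 0 + k)
      = max (v - (b - k)) 0 - max (v - b) 0 + max (v - (1 - u + k)) 0 := by
    intro v
    grind
  have hcont : ∀ t : ℝ, IntervalIntegrable (fun v : ℝ => max (v - t) 0) volume 0 1 :=
    fun t => Continuous.intervalIntegrable (by fun_prop) _ _
  simp_rw [heq]
  rw [integral_add ((hcont _).sub (hcont _)) (hcont _), integral_sub (hcont _) (hcont _),
    integral_max_sub_zero (by linarith) (by linarith),
    integral_max_sub_zero (by linarith) (by linarith),
    integral_max_sub_zero (by linarith) (by linarith)]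
  ring

lemma integral_lowerC {a b c d : ℝ} (hb1 : b ≤ 1) (ha1 : a ≤ 1) (hd0 : 0 ≤ d) (hda : d ≤ a)
    (hdb : d ≤ b) (hab : a + b - 1 ≤ d) (hd : d = max (a + b - 1) 0 + c) :
    ∫ u in (0:ℝ)..1, ∫ v in (0:ℝ)..1, lowerC a b c u v
      = 1 / 6 + d * (1 - a - b + d) * (1 - a - b + 2 * d) / 2 := by
  have heq : ∀ u v : ℝ, lowerC a b c u v
      = max (max (u + v - 1) 0) (min (v - b) 0 + (d + min (u - a) 0)) := by
    intro u v
    rw [lowerC, ← hd]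
    grind
  simp_rw [heq]
  set I : ℝ → ℝ := fun u =>
    ∫ v in (0:ℝ)..1, max (max (u + v - 1) 0) (min (v - b) 0 + (d + min (u - a) 0)) with hI
  have hcont : Continuous I :=
    continuous_parametric_intervalIntegral_of_continuous' (by fun_prop) 0 1
  have hint : ∀ p q : ℝ, IntervalIntegrable I volume p q := fun p q =>
    hcont.intervalIntegrable p q
  have hfirst : ∫ u in (0:ℝ)..(a - d), I u = ∫ u in (0:ℝ)..(a - d), ((u + 0) ^ 2 + 0) / 2 := by
    refine integral_congr fun u hu => ?_
    rw [uIcc_of_le (by linarith)] at hu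
    simp only [hI]
    rw [min_eq_left (by linarith [hu.2]), integral_section_of_outside hu.1 (by linarith [hu.2])
      (Or.inl (by linarith [hu.2]))]
    ring
  have hsecond : ∫ u in (a - d)..a, I u
      = ∫ u in (a - d)..a, ((u + (1 - a - b + d)) ^ 2 + ((a - d) ^ 2 - (1 - b) ^ 2)) / 2 := by
    refine integral_congr fun u hu => ?_
    rw [uIcc_of_le (by linarith)] at hu
    simp only [hI]
    obtain ⟨hu0, hu1⟩ := hu
    rw [min_eq_left (by linarith), integral_section_of_inside hb1 (by linarith) (by linarith)
      (by linarith) (by linarith) (by linarith)]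
    ring
  have hthird : ∫ u in a..(1 - b + d), I u
      = ∫ u in a..(1 - b + d), ((u + -d) ^ 2 + ((1 - b + d) ^ 2 - (1 - b) ^ 2)) / 2 := by
    refine integral_congr fun u hu => ?_
    rw [uIcc_of_le (by linarith)] at hu
    simp only [hI]
    obtain ⟨hu0, hu1⟩ := hu
    rw [min_eq_right (by linarith), integral_section_of_inside hb1 (by linarith) (by linarith)
      (by linarith) (by linarith) (by linarith)]
    ring
  have hfourth : ∫ u in (1 - b + d)..1, I u
      = ∫ u in (1 - b + d)..1, ((u + 0) ^ 2 + 0) / 2 := by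
    refine integral_congr fun u hu => ?_
    rw [uIcc_of_le (by linarith)] at hu
    simp only [hI]
    obtain ⟨hu0, hu1⟩ := hu
    rw [min_eq_right (by linarith), integral_section_of_outside (by linarith) hu1
      (Or.inr (by linarith))]
    ring
  rw [← integral_add_adjacent_intervals (hint 0 (1 - b + d)) (hint _ 1),
    ← integral_add_adjacent_intervals (hint 0 a) (hint _ (1 - b + d)),
    ← integral_add_adjacent_intervals (hint 0 (a - d)) (hint _ a),
    hfirst, hsecond, hthird, hfourth]
  simp only [integral_sq_add_const]
  ring

theorem rho_lowerC (a b c d₁ : ℝ) (ha : a ∈ Set.Icc (0:ℝ) 1) (hb : b ∈ Set.Icc (0:ℝ) 1)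
    (hc0 : 0 ≤ c) (hc : c ≤ min (min a b) (min (1 - a) (1 - b)))
    (hd : d₁ = max (a + b - 1) 0 + c) :
    12 * (∫ u in (0:ℝ)..1, ∫ v in (0:ℝ)..1, lowerC a b c u v) - 3
      = 6 * d₁ * (1 - a - b + d₁) * (1 - a - b + 2 * d₁) - 1 ∧
    spearmanRho (lowerC a b c) = 6 * d₁ * (1 - a - b + d₁) * (1 - a - b + 2 * d₁) - 1 := by
  rw [spearmanRho, and_self]
  simp only [le_min_iff] at hc
  obtain ⟨⟨hca, hcb⟩, hca', hcb'⟩ := hc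
  rw [integral_lowerC hb.2 ha.2 (d := d₁) (by grind) (by grind) (by grind) (by grind) hd]
  ring
end

section
/- Let m ∈ [0,1/3]. For every (a,b) ∈ Δ_m, Spearman's rho of the upper bound copula satisfies ρ(C̄^{(a,b)}_m) ≤ 1 − 36m³, and equality holds at (a,b) = (m, 2m), i.e. ρ(C̄^{(m,2m)}_m) = 1 − 36m³. -/
open Set MeasureTheory intervalIntegral

/-- The integral over `[0, 1]` of the hinge function with kink at `p ∈ [0, 1]`. -/
lemma integral_hinge {p : ℝ} (h0 : 0 ≤ p) (h1 : p ≤ 1) :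
    ∫ v in (0:ℝ)..1, max (v - p) 0 = (1 - p) ^ 2 / 2 := by
  have hc : Continuous fun v : ℝ => max (v - p) 0 := by fun_prop
  have hleft : ∫ v in (0:ℝ)..p, max (v - p) 0 = ∫ v in (0:ℝ)..p, (0:ℝ) := by
    refine integral_congr fun v hv => ?_
    rw [uIcc_of_le h0] at hv
    exact max_eq_right (by linarith [hv.2])
  have hright : ∫ v in p..1, max (v - p) 0 = ∫ v in p..1, (v - p) := by
    refine integral_congr fun v hv => ?_
    rw [uIcc_of_le h1] at hv
    exact max_eq_left (by linarith [hv.1])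
  rw [← integral_add_adjacent_intervals (hc.intervalIntegrable 0 p) (hc.intervalIntegrable p 1),
    hleft, hright, intervalIntegral.integral_sub (by simp) (by simp)]
  simp
  ring

/-- The integral over `[0, 1]` of the piecewise linear function with slope changes at `p, a, q`. -/
lemma integral_sub_hinge_add_hinge_sub_hinge {p a q : ℝ} (hp : p ∈ Icc (0:ℝ) 1)
    (ha : a ∈ Icc (0:ℝ) 1) (hq : q ∈ Icc (0:ℝ) 1) :
    ∫ v in (0:ℝ)..1, (v - max (v - p) 0 + max (v - a) 0 - max (v - q) 0) =
      (1 - (1 - p) ^ 2 + (1 - a) ^ 2 - (1 - q) ^ 2) / 2 := by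
  have hi (r : ℝ) : IntervalIntegrable (fun v : ℝ => max (v - r) 0) volume 0 1 :=
    (by fun_prop : Continuous fun v : ℝ => max (v - r) 0).intervalIntegrable 0 1
  have hid : IntervalIntegrable (fun v : ℝ => v) volume 0 1 := by simp
  rw [intervalIntegral.integral_sub ((hid.sub (hi p)).add (hi a)) (hi q),
    intervalIntegral.integral_add (hid.sub (hi p)) (hi a),
    intervalIntegral.integral_sub hid (hi p),
    integral_hinge hp.1 hp.2, integral_hinge ha.1 ha.2,
    integral_hinge hq.1 hq.2, integral_id]
  ring

lemma integral_quadratic (x y k l n : ℝ) :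
    ∫ u in x..y, (k * u ^ 2 + l * u + n) =
      k * (y ^ 3 - x ^ 3) / 3 + l * (y ^ 2 - x ^ 2) / 2 + n * (y - x) := by
  have h (u : ℝ) : HasDerivAt (fun u => k * u ^ 3 / 3 + l * u ^ 2 / 2 + n * u)
      (k * u ^ 2 + l * u + n) u := by
    refine HasDerivAt.congr_deriv (((((hasDerivAt_pow 3 u).const_mul k).div_const 3).add
      (((hasDerivAt_pow 2 u).const_mul l).div_const 2)).add
      ((hasDerivAt_id u).const_mul n)) ?_
    norm_num
    ring
  rw [integral_eq_sub_of_hasDerivAt (fun u _ => h u)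
    ((by fun_prop : Continuous fun u : ℝ => k * u ^ 2 + l * u + n).intervalIntegrable x y)]
  ring

lemma upperC_eq_of_le {a b : ℝ} (hab : a ≤ b) (m u v : ℝ) :
    upperC a b m u v = min (min u v) (a - m + max (u - b) 0 + max (v - a) 0) := by
  unfold upperC
  rw [min_eq_left hab]
  congr 1
  rcases le_total (u - b) 0 with hu | hu <;> rcases le_total (v - a) 0 with hv | hv <;>
    simp only [max_eq_left, max_eq_right, hu, hv] <;> grind

section Slices

variable {a b m u : ℝ}

lemma upperC_eq_min_of_outside (hm : 0 ≤ m) (hk : m ≤ b - a)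
    (hu : u ≤ a - m ∨ b + m ≤ u) (v : ℝ) :
    upperC a b m u v = v - max (v - u) 0 + max (v - a) 0 - max (v - a) 0 := by
  rw [upperC_eq_of_le (by linarith)]
  grind

lemma upperC_eq_of_mem_left (hm : 0 ≤ m) (hk : m ≤ b - a) (h1 : a - m ≤ u) (h2 : u ≤ b) (v : ℝ) :
    upperC a b m u v =
      v - max (v - (a - m)) 0 + max (v - a) 0 - max (v - (u + m)) 0 := by
  rw [upperC_eq_of_le (by linarith), max_eq_right (by linarith : u - b ≤ 0)]
  grind

lemma upperC_eq_of_mem_right (hm : 0 ≤ m) (hk : m ≤ b - a) (h1 : b ≤ u) (h2 : u ≤ b + m)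
    (v : ℝ) :
    upperC a b m u v =
      v - max (v - (a - m + (u - b))) 0 + max (v - a) 0 - max (v - (b + m)) 0 := by
  rw [upperC_eq_of_le (by linarith), max_eq_left (by linarith : 0 ≤ u - b)]
  grind

end Slices

lemma continuous_integral_upperC (a b m : ℝ) :
    Continuous fun u => ∫ v in (0:ℝ)..1, upperC a b m u v := by
  refine continuous_parametric_intervalIntegral_of_continuous' ?_ 0 1
  unfold Function.uncurry upperC
  fun_prop

/-- The closed form of Spearman's rho of `upperC a b m` on the triangle `Δ_m`. -/
lemma spearmanRho_upperC {a b m : ℝ} (hm : 0 ≤ m) (ha : m ≤ a) (hk : m ≤ b - a)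
    (hab : a + b ≤ 1) :
    spearmanRho (upperC a b m) =
      1 - 6 * m * (2 * m ^ 2 + 3 * m * (b - a) + (b - a) ^ 2) := by
  have hI (x y : ℝ) := (continuous_integral_upperC a b m).intervalIntegrable (μ := volume) x y
  have ha' : a ∈ Icc (0:ℝ) 1 := ⟨by linarith, by linarith⟩
  have houter {x y : ℝ} (hxy : x ≤ y) (hx : 0 ≤ x) (hy : y ≤ 1) (h : y ≤ a - m ∨ b + m ≤ x) :
      ∫ u in x..y, ∫ v in (0:ℝ)..1, upperC a b m u v =
        ∫ u in x..y, (-(1 / 2) * u ^ 2 + 1 * u + 0) := by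
    refine integral_congr fun u hu => ?_
    rw [uIcc_of_le hxy] at hu
    have hu' : u ≤ a - m ∨ b + m ≤ u := h.imp hu.2.trans fun h => h.trans hu.1
    simp only [upperC_eq_min_of_outside hm hk hu']
    rw [integral_sub_hinge_add_hinge_sub_hinge ⟨hx.trans hu.1, hu.2.trans hy⟩ ha' ha']
    ring
  have hleft : ∫ u in (a - m)..b, ∫ v in (0:ℝ)..1, upperC a b m u v =
      ∫ u in (a - m)..b, (-(1 / 2) * u ^ 2 + (1 - m) * u +
        (1 - (1 - (a - m)) ^ 2 + (1 - a) ^ 2 - (1 - m) ^ 2) / 2) := by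
    refine integral_congr fun u hu => ?_
    rw [uIcc_of_le (by linarith)] at hu
    obtain ⟨h1, h2⟩ := hu
    simp only [upperC_eq_of_mem_left hm hk h1 h2]
    rw [integral_sub_hinge_add_hinge_sub_hinge ⟨by linarith, by linarith⟩ ha'
      ⟨by linarith, by linarith⟩]
    ring
  have hright : ∫ u in b..(b + m), ∫ v in (0:ℝ)..1, upperC a b m u v =
      ∫ u in b..(b + m), (-(1 / 2) * u ^ 2 + (1 - (a - m - b)) * u +
        (1 - (1 - (a - m - b)) ^ 2 + (1 - a) ^ 2 - (1 - (b + m)) ^ 2) / 2) := by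
    refine integral_congr fun u hu => ?_
    rw [uIcc_of_le (by linarith)] at hu
    obtain ⟨h1, h2⟩ := hu
    simp only [upperC_eq_of_mem_right hm hk h1 h2]
    rw [integral_sub_hinge_add_hinge_sub_hinge ⟨by linarith, by linarith⟩ ha'
      ⟨by linarith, by linarith⟩]
    ring
  unfold spearmanRho
  rw [← integral_add_adjacent_intervals (hI 0 (a - m)) (hI (a - m) 1),
    ← integral_add_adjacent_intervals (hI (a - m) b) (hI b 1),
    ← integral_add_adjacent_intervals (hI b (b + m)) (hI (b + m) 1),
    houter (by linarith) le_rfl (by linarith) (Or.inl le_rfl), hleft, hright,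
    houter (by linarith) (by linarith) le_rfl (Or.inr le_rfl)]
  simp only [integral_quadratic]
  ring

theorem rho_upperC_max (m : ℝ) (hm : m ∈ Set.Icc (0:ℝ) (1/3)) :
    (∀ a b : ℝ, a ∈ Set.Icc (0:ℝ) 1 → b ∈ Set.Icc (0:ℝ) 1 →
      m ≤ a → m ≤ b - a → a + b ≤ 1 →
      spearmanRho (upperC a b m) ≤ 1 - 36 * m^3) ∧
    spearmanRho (upperC m (2 * m) m) = 1 - 36 * m^3 := by
  obtain ⟨hm0, hm1⟩ := hm
  constructor
  · intro a b _ _ ha hk hab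
    rw [spearmanRho_upperC hm0 ha hk hab]
    have hsum : 6 * m ^ 2 ≤ 2 * m ^ 2 + 3 * m * (b - a) + (b - a) ^ 2 := by nlinarith
    nlinarith [mul_le_mul_of_nonneg_left hsum hm0]
  · rw [spearmanRho_upperC hm0 le_rfl (by linarith) (by linarith)]
    ring
end
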